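/- Let L be a full-rank ℤ-lattice in an n-dimensional real inner product space E and let λ := min{ ‖x‖ : x ∈ L, x ≠ 0 } be its minimum. For 1 ≤ i ≤ n let γ_i denote the i-th Hermite constant, γ_i := sup{ min{ ‖y‖² : y ∈ Λ, y ≠ 0 } / covol(Λ)^{2/i} : Λ a full-rank ℤ-lattice in the Euclidean space ℝ^i }. Then h⁰(L) ≤ n · h⁰(ℤ) + ∑_{i=1}^{n} log max{ 1, γ_i/λ }, where h⁰(ℤ) := log ∑_{m∈ℤ} exp(−π m²). -/

import Mathlib

open MeasureTheory

theorem gauss_summable {c : ℝ} (hc : 0 < c) (s : ℝ) :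
    Summable (fun m : ℤ => Real.exp (-Real.pi * c * ((m : ℝ) + s) ^ 2)) := by
  have h := (summable_jacobiTheta₂_term_iff (Complex.I * (c * s : ℝ)) (Complex.I * (c : ℝ))).2
    (by simpa using hc)
  have h2 := h.norm.mul_left (Real.exp (-Real.pi * c * s ^ 2))
  refine h2.congr fun m => ?_
  rw [norm_jacobiTheta₂_term, ← Real.exp_add]
  congr 1
  simp
  ring

theorem gauss_shift {c : ℝ} (hc : 0 < c) (s : ℝ) :
    ∑' m : ℤ, Real.exp (-Real.pi * c * ((m : ℝ) + s) ^ 2) ≤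
      c ^ (-(1 / 2) : ℝ) * ∑' m : ℤ, Real.exp (-Real.pi / c * (m : ℝ) ^ 2) := by
  have ha : 0 < ((c⁻¹ : ℝ) : ℂ).re := by simpa using hc
  have h := Complex.tsum_exp_neg_quadratic ha (-Complex.I * s)
  have h1 : (∑' n : ℤ, Complex.exp (-Real.pi / ((c⁻¹ : ℝ) : ℂ) * (n + Complex.I * (-Complex.I * s)) ^ 2))
      = ((∑' m : ℤ, Real.exp (-Real.pi * c * ((m : ℝ) + s) ^ 2) : ℝ) : ℂ) := by
    rw [Complex.ofReal_tsum]
    congr 1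
    ext n
    push_cast
    congr 1
    have : Complex.I * (-Complex.I * s) = s := by
      rw [← mul_assoc]; simp
    rw [this]
    field_simp
  rw [h1] at h
  have h2 : ‖∑' n : ℤ, Complex.exp (-Real.pi * ((c⁻¹ : ℝ) : ℂ) * n ^ 2 + 2 * Real.pi * (-Complex.I * s) * n)‖
      ≤ ∑' m : ℤ, Real.exp (-Real.pi / c * (m : ℝ) ^ 2) := by
    have hs := gauss_summable (inv_pos.2 hc) 0
    have e : ∀ n : ℤ, ‖Complex.exp (-Real.pi * ((c⁻¹ : ℝ) : ℂ) * n ^ 2 + 2 * Real.pi * (-Complex.I * s) * n)‖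
      = Real.exp (-Real.pi / c * (n : ℝ) ^ 2) := by
      intro n
      rw [Complex.norm_exp]
      congr 1
      have : (-Real.pi * ((c⁻¹ : ℝ) : ℂ) * n ^ 2 + 2 * Real.pi * (-Complex.I * s) * n : ℂ)
        = ((-Real.pi / c * (n : ℝ) ^ 2 : ℝ) : ℂ) + ((-2 * Real.pi * s * n : ℝ) : ℂ) * Complex.I := by
        push_cast; ring
      rw [this]
      simp only [Complex.add_re, Complex.ofReal_re, Complex.re_ofReal_mul, Complex.I_re, mul_zero, add_zero]
    refine (norm_tsum_le_tsum_norm ?_).trans_eq (by simp_rw [e])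
    simp_rw [e]
    refine hs.congr fun n => ?_
    simp [div_eq_mul_inv]
  rw [h, norm_mul] at h2
  have h3 : (1 : ℂ) / ((c⁻¹ : ℝ) : ℂ) ^ (1 / 2 : ℂ) = ((c ^ (1 / 2 : ℝ) : ℝ) : ℂ) := by
    have : (1 / 2 : ℂ) = ((1 / 2 : ℝ) : ℂ) := by push_cast; rfl
    rw [this, ← Complex.ofReal_cpow (inv_pos.2 hc).le, Real.inv_rpow hc.le]
    push_cast; simp
  rw [h3, Complex.norm_real, Complex.norm_real, Real.norm_of_nonneg (by positivity),
    Real.norm_of_nonneg (tsum_nonneg fun _ => (Real.exp_pos _).le)] at h2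
  rw [Real.rpow_neg hc.le, inv_mul_eq_div, le_div_iff₀ (by positivity), mul_comm]
  exact h2

theorem gauss_bound {c : ℝ} (hc : 0 < c) (s : ℝ) :
    ∑' m : ℤ, Real.exp (-Real.pi * c * ((m : ℝ) + s) ^ 2) ≤
      (∑' m : ℤ, Real.exp (-Real.pi * (m : ℝ) ^ 2)) * max 1 (c ^ (-(1 / 2) : ℝ)) := by
  have hθ : 0 ≤ ∑' m : ℤ, Real.exp (-Real.pi * (m : ℝ) ^ 2) :=
    tsum_nonneg fun _ => (Real.exp_pos _).le
  have hs1 : Summable (fun m : ℤ => Real.exp (-Real.pi * (m : ℝ) ^ 2)) := by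
    simpa using gauss_summable one_pos 0
  have hmono : ∀ d : ℝ, 1 ≤ d → ∑' m : ℤ, Real.exp (-Real.pi * d * (m : ℝ) ^ 2) ≤
      ∑' m : ℤ, Real.exp (-Real.pi * (m : ℝ) ^ 2) := by
    intro d hd
    refine Summable.tsum_le_tsum (fun m => ?_) (by simpa using gauss_summable (zero_lt_one.trans_le hd) 0) hs1
    apply Real.exp_le_exp.2
    have : 0 ≤ Real.pi * (m : ℝ) ^ 2 := by positivity
    nlinarith
  rcases le_total 1 c with h | h
  · have h1 := gauss_shift hc s
    have h2 := Real.tsum_exp_neg_mul_int_sq hc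
    have h3 : (c ^ (-(1 / 2) : ℝ)) = 1 / c ^ (1 / 2 : ℝ) := by
      rw [Real.rpow_neg hc.le]; simp
    rw [h3, ← h2] at h1
    calc _ ≤ _ := h1
      _ ≤ _ := hmono c h
      _ ≤ _ := le_mul_of_one_le_right hθ (le_max_left _ _)
  · calc _ ≤ _ := gauss_shift hc s
      _ ≤ c ^ (-(1 / 2) : ℝ) * ∑' m : ℤ, Real.exp (-Real.pi * (m : ℝ) ^ 2) := by
        refine mul_le_mul_of_nonneg_left ?_ (by positivity)
        have := hmono c⁻¹ (one_le_inv₀ hc |>.2 h)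
        simpa [div_eq_mul_inv] using this
      _ ≤ _ := by
        rw [mul_comm]
        gcongr
        exact le_max_right _ _

theorem gauss_bound' {c : ℝ} (hc : 0 < c) (s : ℝ) :
    ∑' m : ℤ, ENNReal.ofReal (Real.exp (-Real.pi * c * ((m : ℝ) + s) ^ 2)) ≤
      ENNReal.ofReal ((∑' m : ℤ, Real.exp (-Real.pi * (m : ℝ) ^ 2)) * max 1 (c ^ (-(1 / 2) : ℝ))) := by
  rw [← ENNReal.ofReal_tsum_of_nonneg (fun _ => (Real.exp_pos _).le) (gauss_summable hc s)]
  exact ENNReal.ofReal_le_ofReal (gauss_bound hc s)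

theorem exists_min_vec {E : Type*} [NormedAddCommGroup E] [NormedSpace ℝ E] [FiniteDimensional ℝ E]
    (L : Submodule ℤ E) [DiscreteTopology L] (h : ∃ x ∈ L, x ≠ 0) :
    ∃ x ∈ L, x ≠ 0 ∧ ∀ y ∈ L, y ≠ 0 → ‖x‖ ≤ ‖y‖ := by
  obtain ⟨x₀, hx₀, hne⟩ := h
  have : DiscreteTopology L.toAddSubgroup := ‹DiscreteTopology L›
  have hfin : (Metric.closedBall (0 : E) ‖x₀‖ ∩ (L : Set E)).Finite := by
    have : ProperSpace E := FiniteDimensional.proper ℝ E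
    exact Metric.finite_isBounded_inter_isClosed DiscreteTopology.isDiscrete Metric.isBounded_closedBall
      (AddSubgroup.isClosed_of_discrete (H := L.toAddSubgroup))
  have hfin2 : ({x : E | x ∈ L ∧ x ≠ 0 ∧ ‖x‖ ≤ ‖x₀‖}).Finite :=
    hfin.subset fun x hx => ⟨by simpa using hx.2.2, hx.1⟩
  obtain ⟨x, hx, hmin⟩ := Set.exists_min_image _ (fun x => ‖x‖) hfin2 ⟨x₀, hx₀, hne, le_rfl⟩
  refine ⟨x, hx.1, hx.2.1, fun y hy hy0 => ?_⟩
  rcases le_total ‖y‖ ‖x₀‖ with h | h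
  · exact hmin y ⟨hy, hy0, h⟩
  · exact hx.2.2.trans h

/-- Minkowski. -/
theorem minkowski_vec {i : ℕ} (hi : 1 ≤ i) (Λ : Submodule ℤ (EuclideanSpace ℝ (Fin i)))
    [DiscreteTopology Λ] [IsZLattice ℝ Λ] :
    ∃ y ∈ Λ, y ≠ 0 ∧ ‖y‖ ≤ 2 * (ZLattice.covolume Λ volume /
      volume.real (Metric.closedBall (0 : EuclideanSpace ℝ (Fin i)) 1)) ^ ((1 : ℝ) / i) := by
  have : Nonempty (Fin i) := ⟨⟨0, hi⟩⟩
  have : DiscreteTopology Λ.toAddSubgroup := ‹DiscreteTopology Λ›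
  have : Countable Λ.toAddSubgroup := (inferInstance : Countable Λ)
  set V := volume.real (Metric.closedBall (0 : EuclideanSpace ℝ (Fin i)) 1) with hV
  have hVfin : volume (Metric.closedBall (0 : EuclideanSpace ℝ (Fin i)) 1) ≠ ⊤ :=
    Metric.isBounded_closedBall.measure_lt_top.ne
  have hVpos : 0 < V := by
    rw [hV, measureReal_def]
    exact ENNReal.toReal_pos (Metric.measure_closedBall_pos volume _ one_pos).ne' hVfin
  have hc := ZLattice.covolume_pos Λ volume
  set c := ZLattice.covolume Λ volume with hcdef
  set r := 2 * (c / V) ^ ((1 : ℝ) / i) with hr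
  have hr0 : 0 ≤ r := by positivity
  have hfund := ZLattice.isAddFundamentalDomain (Module.Free.chooseBasis ℤ Λ)
    (volume : Measure (EuclideanSpace ℝ (Fin i)))
  have hcov := ZLattice.covolume_eq_measure_fundamentalDomain Λ volume hfund
  set D := ZSpan.fundamentalDomain ((Module.Free.chooseBasis ℤ Λ).ofZLatticeBasis ℝ Λ) with hD
  have hDfin : volume D ≠ ⊤ := (ZSpan.fundamentalDomain_isBounded _).measure_lt_top.ne
  have hrpow : r ^ i * V = c * 2 ^ i := by
    have hi' : (i : ℝ) ≠ 0 := by positivity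
    rw [hr, mul_pow, ← Real.rpow_natCast ((c / V) ^ ((1 : ℝ) / i)), ← Real.rpow_mul (by positivity),
      one_div_mul_cancel hi', Real.rpow_one]
    field_simp
  have hineq : volume D * 2 ^ Module.finrank ℝ (EuclideanSpace ℝ (Fin i)) ≤
      volume (Metric.closedBall (0 : EuclideanSpace ℝ (Fin i)) r) := by
    rw [Measure.addHaar_closedBall' _ _ hr0, finrank_euclideanSpace_fin,
      ← ENNReal.ofReal_toReal hDfin, ← ENNReal.ofReal_toReal hVfin, ← ENNReal.ofReal_mul (by positivity)]
    change ENNReal.ofReal (volume.real D) * 2 ^ i ≤ ENNReal.ofReal (r ^ i * V)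
    rw [hrpow, ← hcov, ENNReal.ofReal_mul hc.le, ENNReal.ofReal_pow (by norm_num), hcdef]
    simp
  obtain ⟨x, hx, hxm⟩ := exists_ne_zero_mem_lattice_of_measure_mul_two_pow_le_measure
    (L := Λ.toAddSubgroup) (F := D) (μ := volume) hfund (s := Metric.closedBall 0 r)
    (by simp) (convex_closedBall _ _) (isCompact_closedBall _ _) hineq
  refine ⟨x, x.2, fun h => hx (Subtype.ext h), by simpa using hxm⟩

def hermiteSet (i : ℕ) : Set ℝ :=
  {t : ℝ | ∃ Λ : Submodule ℤ (EuclideanSpace ℝ (Fin i)),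
        DiscreteTopology Λ ∧
        Submodule.span ℝ (Λ : Set (EuclideanSpace ℝ (Fin i))) = ⊤ ∧
        t = sInf {s : ℝ | ∃ y : EuclideanSpace ℝ (Fin i), y ∈ Λ ∧ y ≠ 0 ∧ ‖y‖ ^ 2 = s} /
          (ZLattice.covolume Λ volume) ^ ((2 : ℝ) / i)}

theorem hermite_bdd {i : ℕ} (hi : 1 ≤ i) : BddAbove (hermiteSet i) := by
  set V := volume.real (Metric.closedBall (0 : EuclideanSpace ℝ (Fin i)) 1) with hV
  refine ⟨4 * V⁻¹ ^ ((2 : ℝ) / i), ?_⟩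
  rintro t ⟨Λ, h1, h2, rfl⟩
  have : IsZLattice ℝ Λ := ⟨h2⟩
  obtain ⟨y, hy, hy0, hle⟩ := minkowski_vec hi Λ
  have hc := ZLattice.covolume_pos Λ volume
  set c := ZLattice.covolume Λ volume with hcdef
  rw [← hV] at hle
  have hV0 : 0 ≤ V := measureReal_nonneg
  rw [div_le_iff₀ (by positivity)]
  calc _ ≤ ‖y‖ ^ 2 := by
        refine csInf_le ⟨0, ?_⟩ ⟨y, hy, hy0, rfl⟩
        rintro s ⟨y, -, -, rfl⟩
        positivity
    _ ≤ (2 * (c / V) ^ ((1 : ℝ) / i)) ^ 2 := by gcongr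
    _ = _ := by
      rw [mul_pow, ← Real.rpow_natCast ((c / V) ^ ((1 : ℝ) / i)), ← Real.rpow_mul (by positivity),
        mul_assoc, ← Real.mul_rpow (by positivity) (by positivity)]
      have e1 : V⁻¹ * c = c / V := by ring
      have e2 : 1 / (i : ℝ) * ((2 : ℕ) : ℝ) = 2 / i := by push_cast; ring
      rw [e1, e2]
      norm_num

theorem hermite_le {i : ℕ} (hi : 1 ≤ i) (Λ : Submodule ℤ (EuclideanSpace ℝ (Fin i)))
    [DiscreteTopology Λ] [IsZLattice ℝ Λ] (m : ℝ) (hm : 0 ≤ m) (h : ∀ y ∈ Λ, y ≠ 0 → m ≤ ‖y‖) :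
    m ^ 2 ≤ sSup (hermiteSet i) * (ZLattice.covolume Λ volume) ^ ((2 : ℝ) / i) := by
  have hc := ZLattice.covolume_pos Λ volume
  rw [← div_le_iff₀ (by positivity)]
  refine le_trans ?_ (le_csSup (hermite_bdd hi) ⟨Λ, ‹_›, IsZLattice.span_top, rfl⟩)
  gcongr
  obtain ⟨y, hy, hy0, -⟩ := minkowski_vec hi Λ
  refine le_csInf ⟨_, y, hy, hy0, rfl⟩ ?_
  rintro s ⟨z, hz, hz0, rfl⟩
  have := h z hz hz0
  gcongr

theorem covol_span {i : ℕ} (b : Module.Basis (Fin i) ℝ (EuclideanSpace ℝ (Fin i))) :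
    ZLattice.covolume (Submodule.span ℤ (Set.range b)) volume =
      |(EuclideanSpace.basisFun (Fin i) ℝ).toBasis.det b| := by
  rw [ZLattice.covolume_eq_measure_fundamentalDomain _ _ (ZSpan.isAddFundamentalDomain b volume),
    ZSpan.measureReal_fundamentalDomain b volume (EuclideanSpace.basisFun (Fin i) ℝ).toBasis,
    measureReal_congr (ZSpan.fundamentalDomain_ae_parallelepiped _ _), measureReal_def]
  have := (EuclideanSpace.basisFun (Fin i) ℝ).volume_parallelepiped
  simp only [OrthonormalBasis.coe_toBasis]
  rw [this]
  simp

theorem exists_dual_vec {i : ℕ} (hi : 1 ≤ i) (L : Submodule ℤ (EuclideanSpace ℝ (Fin i)))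
    [DiscreteTopology L] [IsZLattice ℝ L] (m : ℝ) (hm : 0 ≤ m) (h : ∀ y ∈ L, y ≠ 0 → m ≤ ‖y‖) :
    ∃ u : EuclideanSpace ℝ (Fin i), u ≠ 0 ∧ (∀ x ∈ L, ∃ k : ℤ, inner ℝ u x = k) ∧
      m * ‖u‖ ≤ sSup (hermiteSet i) := by
  obtain ⟨b⟩ : Nonempty (Module.Basis (Fin i) ℤ L) := by
    refine ⟨(Module.Free.chooseBasis ℤ L).reindex (Fintype.equivOfCardEq ?_)⟩
    rw [← Module.finrank_eq_card_chooseBasisIndex, ZLattice.rank ℝ, finrank_euclideanSpace_fin]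
    simp
  set B := b.ofZLatticeBasis ℝ L with hB
  have hspan : Submodule.span ℤ (Set.range B) = L := b.ofZLatticeBasis_span ℝ L
  have hnd : (innerₗ (EuclideanSpace ℝ (Fin i)) : LinearMap.BilinForm ℝ (EuclideanSpace ℝ (Fin i))).Nondegenerate := by
    refine ⟨fun x hx => ?_, fun x hx => ?_⟩
    · simpa using hx x
    · simpa using hx x
  set B' := LinearMap.BilinForm.dualBasis (innerₗ (EuclideanSpace ℝ (Fin i)) : LinearMap.BilinForm ℝ (EuclideanSpace ℝ (Fin i))) hnd B with hB'
  have hdual : ∀ j k, inner ℝ (B' j) (B k) = if k = j then (1 : ℝ) else 0 := fun j k =>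
    LinearMap.BilinForm.apply_dualBasis_left hnd B j k
  set e := EuclideanSpace.basisFun (Fin i) ℝ
  have hdet : e.toBasis.det B' * e.toBasis.det B = 1 := by
    rw [Module.Basis.det_apply, Module.Basis.det_apply, ← Matrix.det_transpose, ← Matrix.det_mul]
    convert Matrix.det_one (R := ℝ) (n := Fin i)
    ext j k
    have := e.sum_inner_mul_inner (B' j) (B k)
    rw [hdual] at this
    rw [Matrix.mul_apply, Matrix.one_apply]
    simp only [Matrix.transpose_apply, Module.Basis.toMatrix_apply, OrthonormalBasis.coe_toBasis_repr_apply,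
      OrthonormalBasis.repr_apply_apply]
    rw [show (if j = k then (1 : ℝ) else 0) = if k = j then 1 else 0 by simp only [eq_comm], ← this]
    exact Finset.sum_congr rfl fun l _ => by rw [real_inner_comm]
  set M := Submodule.span ℤ (Set.range B') with hM
  have hcov : ZLattice.covolume L volume * ZLattice.covolume M volume = 1 := by
    have h1 := covol_span B
    rw [hspan] at h1
    rw [h1, hM, covol_span, ← abs_mul, mul_comm, hdet, abs_one]
  have hne : ∃ x ∈ M, x ≠ 0 := ⟨B' ⟨0, hi⟩, Submodule.subset_span ⟨_, rfl⟩, B'.ne_zero _⟩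
  obtain ⟨u, huM, hu0, humin⟩ := exists_min_vec M hne
  refine ⟨u, hu0, fun x hx => ?_, ?_⟩
  · rw [← hspan] at hx
    refine Submodule.span_induction (p := fun x _ => ∃ k : ℤ, inner ℝ u x = (k : ℝ)) ?_ ?_ ?_ ?_ hx
    · rintro _ ⟨l, rfl⟩
      refine Submodule.span_induction (p := fun u _ => ∃ k : ℤ, inner ℝ u (B l) = (k : ℝ)) ?_ ?_ ?_ ?_ huM
      · rintro _ ⟨j, rfl⟩
        refine ⟨if l = j then 1 else 0, ?_⟩
        rw [hdual]; split_ifs <;> simp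
      · exact ⟨0, by simp⟩
      · rintro x y - - ⟨k, hk⟩ ⟨k', hk'⟩
        exact ⟨k + k', by rw [inner_add_left, hk, hk']; simp⟩
      · rintro a x - ⟨k, hk⟩
        exact ⟨a * k, by rw [← Int.cast_smul_eq_zsmul ℝ, real_inner_smul_left, hk]; simp⟩
    · exact ⟨0, by simp⟩
    · rintro x y - - ⟨k, hk⟩ ⟨k', hk'⟩
      exact ⟨k + k', by rw [inner_add_right, hk, hk']; simp⟩
    · rintro a x - ⟨k, hk⟩
      exact ⟨a * k, by rw [← Int.cast_smul_eq_zsmul ℝ, real_inner_smul_right, hk]; simp⟩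
  · have h1 := hermite_le hi L m hm h
    have h2 := hermite_le hi M ‖u‖ (norm_nonneg _) humin
    have hcL := ZLattice.covolume_pos L volume
    have hcM := ZLattice.covolume_pos M volume
    set g := sSup (hermiteSet i)
    have hp : (ZLattice.covolume L volume) ^ ((2 : ℝ) / i) * (ZLattice.covolume M volume) ^ ((2 : ℝ) / i) = 1 := by
      rw [← Real.mul_rpow hcL.le hcM.le, hcov, Real.one_rpow]
    have hg : 0 ≤ g := by
      by_contra hg
      have : g * (ZLattice.covolume M volume) ^ ((2 : ℝ) / i) < 0 :=
        mul_neg_of_neg_of_pos (not_le.1 hg) (by positivity)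
      nlinarith [sq_nonneg ‖u‖]
    apply le_of_sq_le_sq ?_ hg
    calc (m * ‖u‖) ^ 2 = m ^ 2 * ‖u‖ ^ 2 := by ring
      _ ≤ _ := mul_le_mul h1 h2 (by positivity) (by positivity)
      _ = g ^ 2 * ((ZLattice.covolume L volume) ^ ((2 : ℝ) / i) * (ZLattice.covolume M volume) ^ ((2 : ℝ) / i)) := by ring
      _ = g ^ 2 := by rw [hp, mul_one]

theorem theta_key {E : Type*} [NormedAddCommGroup E] [InnerProductSpace ℝ E] [FiniteDimensional ℝ E]
    (N : ℕ) (γ : ℕ → ℝ) (hγ : ∀ i, 1 ≤ i → i ≤ N → γ i = sSup (hermiteSet i))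
    (lam : ℝ) (hlam : 0 < lam) (θ : ℝ) (hθ : θ = ∑' m : ℤ, Real.exp (-Real.pi * (m : ℝ) ^ 2))
    (hθ1 : 1 ≤ θ) :
    ∀ n ≤ N, ∀ L : Submodule ℤ E, DiscreteTopology L →
      Module.finrank ℝ (Submodule.span ℝ (L : Set E)) ≤ n →
      (∀ x ∈ L, x ≠ 0 → lam ≤ ‖x‖) → ∀ t : E,
      ∑' x : L, ENNReal.ofReal (Real.exp (-Real.pi * ‖(x : E) + t‖ ^ 2)) ≤
        ∏ i ∈ Finset.Icc 1 n, ENNReal.ofReal (θ * max 1 (γ i / lam)) := by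
  intro n
  induction n with
  | zero =>
    intro _ L _ hr _ t
    have h0 : Submodule.span ℝ (L : Set E) = ⊥ := Submodule.finrank_eq_zero.1 (Nat.le_zero.1 hr)
    have hsub : Subsingleton L := by
      refine ⟨fun x y => Subtype.ext ?_⟩
      have : ∀ z : L, (z : E) = 0 := fun z => by
        have := Submodule.subset_span (R := ℝ) z.2
        rw [h0] at this
        simpa using this
      rw [this x, this y]
    rw [tsum_eq_single (0 : L) (fun b hb => absurd (Subsingleton.elim b 0) hb)]
    simp only [Finset.Icc_eq_empty_of_lt (Nat.zero_lt_one), Finset.prod_empty]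
    rw [← ENNReal.ofReal_one]
    apply ENNReal.ofReal_le_ofReal
    rw [Real.exp_le_one_iff]
    have : 0 ≤ Real.pi * ‖((0 : L) : E) + t‖ ^ 2 := by positivity
    linarith
  | succ n ih =>
    intro hN L hd hr hmin t
    have hIcc : ∏ i ∈ Finset.Icc 1 (n + 1), ENNReal.ofReal (θ * max 1 (γ i / lam)) =
        (∏ i ∈ Finset.Icc 1 n, ENNReal.ofReal (θ * max 1 (γ i / lam))) *
          ENNReal.ofReal (θ * max 1 (γ (n + 1) / lam)) :=
      Finset.prod_Icc_succ_top (by omega) _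
    rw [hIcc]
    set P := ∏ i ∈ Finset.Icc 1 n, ENNReal.ofReal (θ * max 1 (γ i / lam)) with hP
    rcases hr.lt_or_eq with hlt | heq
    · refine (ih (by omega) L hd (by omega) hmin t).trans ?_
      refine le_mul_of_one_le_right' ?_
      rw [← ENNReal.ofReal_one]
      exact ENNReal.ofReal_le_ofReal (one_le_mul_of_one_le_of_one_le hθ1 (le_max_left _ _))
    -- the full rank case
    set W := Submodule.span ℝ (L : Set E) with hW
    let e : W ≃ₗᵢ[ℝ] EuclideanSpace ℝ (Fin (n + 1)) :=
      ((stdOrthonormalBasis ℝ W).reindex (finCongr heq)).repr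
    let φ : EuclideanSpace ℝ (Fin (n + 1)) →ₗᵢ[ℝ] E := W.subtypeₗᵢ.comp e.symm.toLinearIsometry
    have hφW : ∀ y, φ y ∈ W := fun y => (e.symm y).2
    have hφ : ∀ x ∈ W, ∃ y, φ y = x := fun x hx => ⟨e ⟨x, hx⟩, by simp [φ]⟩
    have hLW : ∀ x ∈ L, x ∈ W := fun x hx => Submodule.subset_span hx
    let L₀ : Submodule ℤ (EuclideanSpace ℝ (Fin (n + 1))) := ZLattice.comap ℝ L φ.toLinearMap
    have hL₀ : ∀ y, y ∈ L₀ ↔ φ y ∈ L := fun y => Iff.rfl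
    have hd₀ : DiscreteTopology L₀ :=
      ZLattice.comap_discreteTopology ℝ L φ.continuous φ.injective
    have hz₀ : IsZLattice ℝ L₀ := by
      refine ⟨?_⟩
      apply Submodule.map_injective_of_injective (f := φ.toLinearMap) φ.injective
      rw [Submodule.map_span]
      have : (φ.toLinearMap '' (L₀ : Set (EuclideanSpace ℝ (Fin (n + 1))))) = (L : Set E) := by
        ext x
        constructor
        · rintro ⟨y, hy, rfl⟩
          exact hy
        · intro hx
          obtain ⟨y, rfl⟩ := hφ x (hLW x hx)
          exact ⟨y, hx, rfl⟩
      rw [this]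
      apply le_antisymm
      · intro x hx
        obtain ⟨y, rfl⟩ := hφ x hx
        exact ⟨y, trivial, rfl⟩
      · rintro _ ⟨y, -, rfl⟩
        exact hφW y
    obtain ⟨u₀, hu₀, hint₀, hbd₀⟩ := exists_dual_vec (by omega) L₀ lam hlam.le (fun y hy hy0 => by
      rw [← φ.norm_map]
      exact hmin _ hy (fun h => hy0 (φ.injective (h.trans (map_zero φ).symm))))
    rw [← hγ (n + 1) (by omega) hN] at hbd₀
    obtain ⟨u, hu⟩ : ∃ u, u = φ u₀ := ⟨_, rfl⟩
    have hu0 : u ≠ 0 := fun h => hu₀ (φ.injective ((hu.symm.trans h).trans (map_zero φ).symm))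
    have huW : u ∈ W := hu ▸ hφW _
    have hunorm : ‖u‖ ≤ γ (n + 1) / lam := by
      rw [le_div_iff₀ hlam, hu, φ.norm_map, mul_comm]
      exact hbd₀
    have hint : ∀ x : L, ∃ k : ℤ, inner ℝ u (x : E) = k := by
      rintro ⟨x, hx⟩
      obtain ⟨y, rfl⟩ := hφ x (hLW x hx)
      obtain ⟨k, hk⟩ := hint₀ y hx
      exact ⟨k, by rw [hu, φ.inner_map_map, hk]⟩
    choose f hf using hint
    have hupos : 0 < ‖u‖ := norm_pos_iff.2 hu0
    let L' : Submodule ℤ E := L ⊓ ((ℝ ∙ u)ᗮ).restrictScalars ℤ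
    have hL'mem : ∀ x, x ∈ L' ↔ x ∈ L ∧ inner ℝ u x = 0 := fun x => by
      change x ∈ L ∧ x ∈ (ℝ ∙ u)ᗮ ↔ _
      rw [Submodule.mem_orthogonal_singleton_iff_inner_right]
    have hd' : DiscreteTopology L' :=
      DiscreteTopology.of_subset (s := (L : Set E)) hd (fun x hx => hx.1)
    have hr' : Module.finrank ℝ (Submodule.span ℝ (L' : Set E)) ≤ n := by
      have hle : Submodule.span ℝ (L' : Set E) ≤ W := Submodule.span_mono fun x hx => hx.1
      have horth : Submodule.span ℝ (L' : Set E) ≤ (ℝ ∙ u)ᗮ :=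
        Submodule.span_le.2 fun x hx => hx.2
      have hlt : Submodule.span ℝ (L' : Set E) < W := by
        refine lt_of_le_of_ne hle fun h => hu0 ?_
        have := horth (h ▸ huW)
        rw [Submodule.mem_orthogonal_singleton_iff_inner_right] at this
        simpa using this
      have := Submodule.finrank_lt_finrank_of_lt hlt
      omega
    have hih := ih (by omega) L' hd' hr' (fun x hx => hmin x hx.1)
    have hc : 0 < (‖u‖ ^ 2)⁻¹ := by positivity
    have hfib : ∀ m : ℤ, ∑' x : {x : L // f x = m},
        ENNReal.ofReal (Real.exp (-Real.pi * ‖((x : L) : E) + t‖ ^ 2)) ≤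
        P * ENNReal.ofReal (Real.exp (-Real.pi * (‖u‖ ^ 2)⁻¹ * ((m : ℝ) + inner ℝ u t) ^ 2)) := by
      intro m
      rcases isEmpty_or_nonempty {x : L // f x = m} with hemp | ⟨⟨x₀, hx₀⟩⟩
      · simp
      set q : E := (x₀ + t) - ((m + inner ℝ u t) * (‖u‖ ^ 2)⁻¹) • u with hq
      have huu : inner ℝ u u = ‖u‖ ^ 2 := real_inner_self_eq_norm_sq u
      have huq : inner ℝ u q = 0 := by
        rw [hq, inner_sub_right, inner_add_right, real_inner_smul_right, huu, hf, hx₀]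
        field_simp
        ring
      let g : {x : L // f x = m} → L' := fun x => ⟨(x : L) - x₀, by
        rw [hL'mem]
        refine ⟨sub_mem (x : L).2 x₀.2, ?_⟩
        rw [inner_sub_right, hf, hf, x.2, hx₀, sub_self]⟩
      have hg : Function.Injective g := by
        intro x y hxy
        have : ((x : L) : E) - x₀ = (y : L) - x₀ := congrArg Subtype.val hxy
        exact Subtype.ext (Subtype.ext (sub_left_injective this))
      have hterm : ∀ x : {x : L // f x = m},
          ENNReal.ofReal (Real.exp (-Real.pi * ‖((x : L) : E) + t‖ ^ 2)) =
          ENNReal.ofReal (Real.exp (-Real.pi * ‖((g x : L') : E) + q‖ ^ 2)) *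
          ENNReal.ofReal (Real.exp (-Real.pi * (‖u‖ ^ 2)⁻¹ * ((m : ℝ) + inner ℝ u t) ^ 2)) := by
        intro x
        rw [← ENNReal.ofReal_mul (Real.exp_pos _).le, ← Real.exp_add]
        congr 2
        have hdec : ((x : L) : E) + t = ((g x : L') + q) + ((m + inner ℝ u t) * (‖u‖ ^ 2)⁻¹) • u := by
          change _ = ((((x : L) : E) - x₀) + q) + _
          rw [hq]; abel
        have horth : inner ℝ (((g x : L') : E) + q) (((m + inner ℝ u t) * (‖u‖ ^ 2)⁻¹) • u) = 0 := by
          rw [real_inner_smul_right, real_inner_comm u, inner_add_right, huq, ((hL'mem _).1 (g x).2).2]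
          simp
        rw [hdec, norm_add_sq_real, horth, norm_smul, mul_pow, Real.norm_eq_abs, sq_abs]
        field_simp
        ring
      simp_rw [hterm]
      rw [ENNReal.tsum_mul_right]
      gcongr
      exact (ENNReal.tsum_comp_le_tsum_of_injective hg
        (fun y : L' => ENNReal.ofReal (Real.exp (-Real.pi * ‖(y : E) + q‖ ^ 2)))).trans (hih q)
    calc ∑' x : L, ENNReal.ofReal (Real.exp (-Real.pi * ‖(x : E) + t‖ ^ 2))
        = ∑' m : ℤ, ∑' x : {x : L // f x = m},
          ENNReal.ofReal (Real.exp (-Real.pi * ‖((x : L) : E) + t‖ ^ 2)) := by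
          rw [← (Equiv.sigmaFiberEquiv f).tsum_eq, ENNReal.tsum_sigma']
          rfl
      _ ≤ ∑' m : ℤ, P * ENNReal.ofReal
            (Real.exp (-Real.pi * (‖u‖ ^ 2)⁻¹ * ((m : ℝ) + inner ℝ u t) ^ 2)) :=
          ENNReal.tsum_le_tsum hfib
      _ ≤ P * ENNReal.ofReal (θ * max 1 ‖u‖) := by
          rw [ENNReal.tsum_mul_left]
          gcongr
          refine (gauss_bound' hc _).trans_eq ?_
          have : ((‖u‖ ^ 2)⁻¹ : ℝ) ^ (-(1 / 2) : ℝ) = ‖u‖ := by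
            rw [Real.rpow_neg hc.le, Real.inv_rpow (by positivity), inv_inv, ← Real.sqrt_eq_rpow,
              Real.sqrt_sq hupos.le]
          rw [this, hθ]
      _ ≤ _ := by gcongr

/-- **Groenewegen's upper bound for the theta invariant.**
Let `L` be a full-rank `ℤ`-lattice in an `n`-dimensional real inner product space `E` and let
`λ = min {‖x‖ : x ∈ L, x ≠ 0}` be its minimum.  For `1 ≤ i ≤ n` let `γᵢ` denote the `i`-th
Hermite constant, i.e. the supremum over all full-rank `ℤ`-lattices `Λ` in `ℝⁱ` of
`min {‖y‖² : y ∈ Λ, y ≠ 0} / covol(Λ)^(2/i)`.  Then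
`h⁰(L) ≤ n ⬝ h⁰(ℤ) + ∑_{i = 1}^{n} log max {1, γᵢ / λ}`, where
`h⁰(L) = log ∑_{x ∈ L} exp (-π ‖x‖²)` and `h⁰(ℤ) = log ∑_{m ∈ ℤ} exp (-π m²)`. -/
theorem theta_upper_bound_hermite
    {E : Type*} [NormedAddCommGroup E] [InnerProductSpace ℝ E] [FiniteDimensional ℝ E]
    (n : ℕ) (hn : n = Module.finrank ℝ E)
    (L : Submodule ℤ E) [DiscreteTopology L]
    (hL : Submodule.span ℝ (L : Set E) = ⊤)
    (lam : ℝ) (hlam : lam = sInf {t : ℝ | ∃ x : E, x ∈ L ∧ x ≠ 0 ∧ ‖x‖ = t})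
    (γ : ℕ → ℝ)
    (hγ : ∀ i, 1 ≤ i → i ≤ n →
      γ i = sSup {t : ℝ | ∃ Λ : Submodule ℤ (EuclideanSpace ℝ (Fin i)),
        DiscreteTopology Λ ∧
        Submodule.span ℝ (Λ : Set (EuclideanSpace ℝ (Fin i))) = ⊤ ∧
        t = sInf {s : ℝ | ∃ y : EuclideanSpace ℝ (Fin i), y ∈ Λ ∧ y ≠ 0 ∧ ‖y‖ ^ 2 = s} /
          (ZLattice.covolume Λ volume) ^ ((2 : ℝ) / i)}) :
    Real.log (∑' x : L, Real.exp (-Real.pi * ‖(x : E)‖ ^ 2)) ≤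
      n * Real.log (∑' m : ℤ, Real.exp (-Real.pi * (m : ℝ) ^ 2)) +
        ∑ i ∈ Finset.Icc 1 n, Real.log (max 1 (γ i / lam)) := by
  have hγ' : ∀ i, 1 ≤ i → i ≤ n → γ i = sSup (hermiteSet i) := hγ
  obtain ⟨θ, hθ⟩ : ∃ θ, θ = ∑' m : ℤ, Real.exp (-Real.pi * (m : ℝ) ^ 2) := ⟨_, rfl⟩
  have hθ1 : 1 ≤ θ := by
    have hs1 : Summable (fun m : ℤ => Real.exp (-Real.pi * (m : ℝ) ^ 2)) := by
      simpa using gauss_summable one_pos 0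
    have := hs1.le_tsum 0 (fun _ _ => (Real.exp_pos _).le)
    rw [hθ]
    simpa using this
  have hrank : Module.finrank ℝ (Submodule.span ℝ (L : Set E)) ≤ n := by
    rw [hL, finrank_top, hn]
  -- the main bound, for a positive real number `l` which equals `lam` when `n` is positive
  obtain ⟨l, hl, hlmin, hll⟩ : ∃ l : ℝ, 0 < l ∧ (∀ x ∈ L, x ≠ 0 → l ≤ ‖x‖) ∧ (1 ≤ n → l = lam) := by
    by_cases h : ∃ x ∈ L, x ≠ 0
    · obtain ⟨x, hx, hx0, hmin⟩ := exists_min_vec L h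
      refine ⟨‖x‖, norm_pos_iff.2 hx0, hmin, fun _ => ?_⟩
      rw [hlam]
      have hleast : IsLeast {t : ℝ | ∃ x : E, x ∈ L ∧ x ≠ 0 ∧ ‖x‖ = t} ‖x‖ := by
        refine ⟨⟨x, hx, hx0, rfl⟩, ?_⟩
        rintro _ ⟨y, hy, hy0, rfl⟩
        exact hmin y hy hy0
      exact hleast.csInf_eq.symm
    · push Not at h
      refine ⟨1, one_pos, fun x hx hx0 => absurd (h x hx) hx0, fun h1 => ?_⟩
      exfalso
      have : Submodule.span ℝ (L : Set E) = ⊥ := by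
        rw [Submodule.span_eq_bot]
        exact h
      rw [hL] at this
      have h2 : Module.finrank ℝ E = 0 := by
        rw [← finrank_top ℝ E, this, finrank_bot]
      omega
  have key := theta_key n γ hγ' l hl θ hθ hθ1 n le_rfl L ‹_› hrank hlmin 0
  simp only [add_zero] at key
  rw [← ENNReal.ofReal_prod_of_nonneg (fun i _ => by positivity)] at key
  have hfin : ∑' x : L, ENNReal.ofReal (Real.exp (-Real.pi * ‖(x : E)‖ ^ 2)) ≠ ⊤ :=
    (key.trans_lt ENNReal.ofReal_lt_top).ne
  have hsum : Summable (fun x : L => Real.exp (-Real.pi * ‖(x : E)‖ ^ 2)) := by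
    have := ENNReal.summable_toReal hfin
    simpa only [ENNReal.toReal_ofReal (Real.exp_pos _).le] using this
  rw [← ENNReal.ofReal_tsum_of_nonneg (fun _ => (Real.exp_pos _).le) hsum,
    ENNReal.ofReal_le_ofReal_iff (Finset.prod_nonneg fun i _ => by positivity)] at key
  have hpos : 0 < ∑' x : L, Real.exp (-Real.pi * ‖(x : E)‖ ^ 2) :=
    hsum.tsum_pos (fun _ => (Real.exp_pos _).le) 0 (Real.exp_pos _)
  have hθ0 : θ ≠ 0 := by positivity
  have hm0 : ∀ i, max 1 (γ i / l) ≠ 0 := fun i => by positivity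
  calc _ ≤ _ := Real.log_le_log hpos key
    _ = ∑ i ∈ Finset.Icc 1 n, (Real.log θ + Real.log (max 1 (γ i / l))) := by
      rw [Real.log_prod (fun i _ => mul_ne_zero hθ0 (hm0 i))]
      exact Finset.sum_congr rfl fun i _ => Real.log_mul hθ0 (hm0 i)
    _ = n * Real.log θ + ∑ i ∈ Finset.Icc 1 n, Real.log (max 1 (γ i / l)) := by
      rw [Finset.sum_add_distrib]
      simp
    _ = _ := by
      rw [hθ]
      congr 1
      refine Finset.sum_congr rfl fun i hi => ?_
      rw [Finset.mem_Icc] at hi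
      rw [hll (by omega)]
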